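/- The monoid algebra k[W(X,Ω)] is the free Ω-operated unital k-algebra on X. Precisely: for every associative unital k-algebra A, every family of k-linear maps β_ω : A → A (ω ∈ Ω), and every map f : X → A, there exists a unique k-algebra homomorphism φ : k[W(X,Ω)] → A such that φ(x) = f(x) for every x ∈ X and φ(P_ω(w)) = β_ω(φ(w)) for every w ∈ W(X,Ω) and every ω ∈ Ω (where elements of W(X,Ω) are viewed as basis elements of k[W(X,Ω)]). -/

import Mathlib

/-- The left bracket letter `⌊_ω` as a one-letter word. -/
def lbr {X Ω : Type*} (ω : Ω) : FreeMonoid (X ⊕ (Ω ⊕ Ω)) :=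
  FreeMonoid.of (Sum.inr (Sum.inl ω))

/-- The right bracket letter `⌋_ω` as a one-letter word. -/
def rbr {X Ω : Type*} (ω : Ω) : FreeMonoid (X ⊕ (Ω ⊕ Ω)) :=
  FreeMonoid.of (Sum.inr (Sum.inr ω))

/-- The operator `P_ω` on the free monoid: `P_ω w = ⌊_ω w ⌋_ω`. -/
def Pop {X Ω : Type*} (ω : Ω) (w : FreeMonoid (X ⊕ (Ω ⊕ Ω))) : FreeMonoid (X ⊕ (Ω ⊕ Ω)) :=
  lbr ω * w * rbr ω

/-- `(X,Ω)`-decorated Motzkin words. -/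
inductive IsMW (X Ω : Type*) : FreeMonoid (X ⊕ (Ω ⊕ Ω)) → Prop
  | one : IsMW X Ω 1
  | letter (x : X) : IsMW X Ω (FreeMonoid.of (Sum.inl x))
  | mul {u v : FreeMonoid (X ⊕ (Ω ⊕ Ω))} : IsMW X Ω u → IsMW X Ω v → IsMW X Ω (u * v)
  | op (ω : Ω) {u : FreeMonoid (X ⊕ (Ω ⊕ Ω))} : IsMW X Ω u → IsMW X Ω (Pop ω u)

/-- `W(X,Ω)` as a submonoid of the free monoid. -/
def MWsub (X Ω : Type*) : Submonoid (FreeMonoid (X ⊕ (Ω ⊕ Ω))) where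
  carrier := {w | IsMW X Ω w}
  one_mem' := IsMW.one
  mul_mem' := fun h1 h2 => IsMW.mul h1 h2

/-- The operator `P_ω` restricted to `W(X,Ω)`. -/
def PopSub {X Ω : Type*} (ω : Ω) (w : MWsub X Ω) : MWsub X Ω :=
  ⟨Pop ω w.1, IsMW.op ω w.2⟩

/-- The natural map `j_X : X → W(X,Ω)`. -/
def jMW {X Ω : Type*} (x : X) : MWsub X Ω :=
  ⟨FreeMonoid.of (Sum.inl x), IsMW.letter x⟩

/-- One step of the stack machine evaluating a word: the state is the current accumulated
product together with the stack of suspended products. -/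
def mwStep {X Ω A : Type*} [Semiring A] (β : Ω → A → A) (f : X → A) :
    A × List A → X ⊕ (Ω ⊕ Ω) → A × List A
  | (a, s), Sum.inl x => (a * f x, s)
  | (a, s), Sum.inr (Sum.inl _) => (1, a :: s)
  | (a, []), Sum.inr (Sum.inr _) => (a, [])
  | (a, b :: s), Sum.inr (Sum.inr ω) => (b * β ω a, s)

/-- Run the stack machine on a word. -/
def mwRun {X Ω A : Type*} [Semiring A] (β : Ω → A → A) (f : X → A)
    (p : A × List A) (w : FreeMonoid (X ⊕ (Ω ⊕ Ω))) : A × List A :=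
  List.foldl (mwStep β f) p w.toList

theorem mwRun_mul {X Ω A : Type*} [Semiring A] (β : Ω → A → A) (f : X → A)
    (p : A × List A) (u v : FreeMonoid (X ⊕ (Ω ⊕ Ω))) :
    mwRun β f p (u * v) = mwRun β f (mwRun β f p u) v := by
  simp [mwRun, FreeMonoid.toList_mul, List.foldl_append]

theorem mwRun_of {X Ω A : Type*} [Semiring A] (β : Ω → A → A) (f : X → A)
    (p : A × List A) (c : X ⊕ (Ω ⊕ Ω)) :
    mwRun β f p (FreeMonoid.of c) = mwStep β f p c := by
  simp [mwRun, FreeMonoid.toList_of]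

/-- The value of a word. -/
def mwEval {X Ω A : Type*} [Semiring A] (β : Ω → A → A) (f : X → A)
    (w : FreeMonoid (X ⊕ (Ω ⊕ Ω))) : A := (mwRun β f (1, []) w).1

theorem mwRun_exists {X Ω A : Type*} [Semiring A] (β : Ω → A → A) (f : X → A)
    {w : FreeMonoid (X ⊕ (Ω ⊕ Ω))} (hw : IsMW X Ω w) :
    ∃ c : A, ∀ (a : A) (s : List A), mwRun β f (a, s) w = (a * c, s) := by
  induction hw with
  | one => exact ⟨1, fun a s => by simp [mwRun]⟩
  | letter x => exact ⟨f x, fun a s => by simp [mwRun_of, mwStep]⟩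
  | mul _ _ ihu ihv =>
    obtain ⟨c, hc⟩ := ihu
    obtain ⟨d, hd⟩ := ihv
    exact ⟨c * d, fun a s => by simp [mwRun_mul, hc, hd, mul_assoc]⟩
  | op ω _ ih =>
    obtain ⟨c, hc⟩ := ih
    exact ⟨β ω c, fun a s => by simp [Pop, lbr, rbr, mwRun_mul, mwRun_of, mwStep, hc]⟩

/-- The evaluation as a monoid homomorphism. -/
def mwHom {X Ω A : Type*} [Semiring A] (β : Ω → A → A) (f : X → A) : MWsub X Ω →* A where
  toFun w := mwEval β f w.1
  map_one' := by simp [mwEval, mwRun]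
  map_mul' u v := by
    obtain ⟨c, hc⟩ := mwRun_exists β f u.2
    obtain ⟨d, hd⟩ := mwRun_exists β f v.2
    simp [mwEval, mwRun_mul, hc, hd]

theorem mwHom_jMW {X Ω A : Type*} [Semiring A] (β : Ω → A → A) (f : X → A) (x : X) :
    mwHom β f (jMW x) = f x := by
  simp [mwHom, jMW, mwEval, mwRun_of, mwStep]

theorem mwHom_PopSub {X Ω A : Type*} [Semiring A] (β : Ω → A → A) (f : X → A) (ω : Ω)
    (w : MWsub X Ω) : mwHom β f (PopSub ω w) = β ω (mwHom β f w) := by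
  obtain ⟨c, hc⟩ := mwRun_exists β f w.2
  simp [mwHom, PopSub, Pop, lbr, rbr, mwEval, mwRun_mul, mwRun_of, mwStep, hc]

/-- The monoid algebra `k[W(X,Ω)]` is the free `Ω`-operated unital `k`-algebra on `X`:
for every associative unital `k`-algebra `A`, family of `k`-linear maps `β_ω : A → A` and
map `f : X → A`, there is a unique `k`-algebra homomorphism `φ : k[W(X,Ω)] → A` with
`φ x = f x` for all `x ∈ X` and `φ (P_ω w) = β_ω (φ w)` for all `w ∈ W(X,Ω)`, `ω ∈ Ω`
(elements of `W(X,Ω)` being viewed as basis elements of `k[W(X,Ω)]`). -/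
theorem monoidAlgebra_motzkinWords_free_operated_algebra
    (k : Type*) [CommRing k] (X Ω : Type*) [Nonempty X] [Nonempty Ω]
    (A : Type*) [Semiring A] [Algebra k A] (β : Ω → A →ₗ[k] A) (f : X → A) :
    ∃! φ : MonoidAlgebra k ↥(MWsub X Ω) →ₐ[k] A,
      (∀ x : X, φ (MonoidAlgebra.of k ↥(MWsub X Ω) (jMW x)) = f x) ∧
      ∀ (ω : Ω) (w : MWsub X Ω),
        φ (MonoidAlgebra.of k ↥(MWsub X Ω) (PopSub ω w)) =
          β ω (φ (MonoidAlgebra.of k ↥(MWsub X Ω) w)) := by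
  refine ⟨MonoidAlgebra.lift k A (MWsub X Ω) (mwHom (fun ω => β ω) f), ⟨?_, ?_⟩, ?_⟩
  · intro x
    rw [MonoidAlgebra.lift_of, mwHom_jMW]
  · intro ω w
    rw [MonoidAlgebra.lift_of, MonoidAlgebra.lift_of, mwHom_PopSub]
  · rintro ψ ⟨h1, h2⟩
    refine MonoidAlgebra.algHom_ext' ?_ (Subsingleton.elim _ _)
    ext ⟨w, hw⟩
    change ψ (MonoidAlgebra.of k _ _) = MonoidAlgebra.lift k A _ _ (MonoidAlgebra.of k _ _)
    rw [MonoidAlgebra.lift_of]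
    induction hw with
    | one =>
      exact (congrArg ψ (map_one _)).trans ((map_one ψ).trans (map_one (mwHom _ f)).symm)
    | letter x => exact (h1 x).trans (mwHom_jMW _ f x).symm
    | @mul u v hu hv ihu ihv =>
      have e : (⟨u * v, IsMW.mul hu hv⟩ : MWsub X Ω) = ⟨u, hu⟩ * ⟨v, hv⟩ := rfl
      rw [e, map_mul, map_mul, map_mul, ihu, ihv]
    | @op ω u hu ih =>
      refine (h2 ω ⟨u, hu⟩).trans ?_
      rw [ih]
      exact (mwHom_PopSub (fun ω => β ω) f ω ⟨u, hu⟩).symm
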